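/- If f: X → Y is a light continuous map of a compact metric space X onto a compact metric space Y of finite covering dimension, then for every abelian group A one has dim_A X ≤ dim_A Y. -/

import Mathlib

open Set Function

open scoped ENNReal

noncomputable section

/-! ### Covering dimension -/

/-- `CovDimLE X n` : every open cover of `X` has an open refinement of order at most `n + 1`
(i.e. at most `n + 1` members of the refinement have a common point). -/
def CovDimLE (X : Type*) [TopologicalSpace X] (n : ℕ) : Prop :=
  ∀ U : Set (Set X), (∀ u ∈ U, IsOpen u) → ⋃₀ U = univ →
    ∃ V : Set (Set X), (∀ v ∈ V, IsOpen v) ∧ ⋃₀ V = univ ∧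
      (∀ v ∈ V, ∃ u ∈ U, v ⊆ u) ∧
      ∀ T : Finset (Set X), ↑T ⊆ V → (⋂₀ (T : Set (Set X))).Nonempty → T.card ≤ n + 1

/-- The (Lebesgue) covering dimension of a topological space, valued in `ℕ∞`. -/
noncomputable def covDim (X : Type*) [TopologicalSpace X] : ℕ∞ :=
  sInf {e : ℕ∞ | ∃ n : ℕ, e = (n : ℕ∞) ∧ CovDimLE X n}

/-! ### Alexander–Spanier (Čech) cohomology -/

namespace AS

variable (A : Type*) [AddCommGroup A]

/-- Alexander–Spanier `n`-cochains on `X` with coefficients in `A`. -/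
abbrev Cochain (X : Type*) (n : ℕ) : Type _ := (Fin (n + 1) → X) → A

/-- The Alexander–Spanier coboundary operator. -/
def d (X : Type*) (n : ℕ) : Cochain A X n →+ Cochain A X (n + 1) :=
  AddMonoidHom.mk' (fun φ s => ∑ i : Fin (n + 2), ((-1 : ℤ) ^ (i : ℕ)) • φ (s ∘ i.succAbove))
    (fun φ ψ => funext fun s => by
      simp [smul_add, Finset.sum_add_distrib])

/-- An open cover of `X`. -/
def IsOpenCover {X : Type*} [TopologicalSpace X] (U : Set (Set X)) : Prop :=
  (∀ u ∈ U, IsOpen u) ∧ ⋃₀ U = univ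

/-- A tuple is `U`-small if it is contained in a single member of `U`. -/
def Small {X : Type*} (U : Set (Set X)) {k : ℕ} (s : Fin k → X) : Prop :=
  ∃ u ∈ U, ∀ i, s i ∈ u

/-- The subgroup of cochains vanishing on all tuples that are small with respect to
some open cover (i.e. vanishing in a neighbourhood of the diagonal). -/
def locZero (X : Type*) [TopologicalSpace X] (n : ℕ) : AddSubgroup (Cochain A X n) where
  carrier := {φ | ∃ U, IsOpenCover U ∧ ∀ s : Fin (n + 1) → X, Small U s → φ s = 0}
  zero_mem' := ⟨{univ}, ⟨fun u hu => by rw [mem_singleton_iff] at hu; rw [hu]; exact isOpen_univ,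
      by simp⟩, fun s _ => rfl⟩
  add_mem' := by
    rintro φ ψ ⟨U, ⟨hUo, hUc⟩, hφ⟩ ⟨W, ⟨hWo, hWc⟩, hψ⟩
    refine ⟨(fun p : Set X × Set X => p.1 ∩ p.2) '' (U ×ˢ W), ⟨?_, ?_⟩, ?_⟩
    · rintro _ ⟨⟨u, w⟩, ⟨hu, hw⟩, rfl⟩
      exact (hUo u hu).inter (hWo w hw)
    · apply eq_univ_of_forall
      intro x
      have hx1 : x ∈ ⋃₀ U := hUc ▸ mem_univ x
      have hx2 : x ∈ ⋃₀ W := hWc ▸ mem_univ x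
      obtain ⟨u, hu, hxu⟩ := hx1
      obtain ⟨w, hw, hxw⟩ := hx2
      exact ⟨u ∩ w, ⟨⟨u, w⟩, ⟨hu, hw⟩, rfl⟩, hxu, hxw⟩
    · rintro s ⟨_, ⟨⟨u, w⟩, ⟨hu, hw⟩, rfl⟩, hs⟩
      have h1 : φ s = 0 := hφ s ⟨u, hu, fun i => (hs i).1⟩
      have h2 : ψ s = 0 := hψ s ⟨w, hw, fun i => (hs i).2⟩
      show φ s + ψ s = 0
      rw [h1, h2, add_zero]
  neg_mem' := by
    rintro φ ⟨U, hU, hφ⟩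
    exact ⟨U, hU, fun s hs => by show -φ s = 0; rw [hφ s hs, neg_zero]⟩

/-- The Alexander–Spanier cochain complex: cochains modulo locally zero cochains. -/
abbrev QC (X : Type*) [TopologicalSpace X] (n : ℕ) : Type _ := Cochain A X n ⧸ locZero A X n

lemma d_locZero (X : Type*) [TopologicalSpace X] (n : ℕ) :
    locZero A X n ≤ (locZero A X (n + 1)).comap (d A X n) := by
  rintro φ ⟨U, hU, hφ⟩
  refine ⟨U, hU, fun s ⟨u, hu, hs⟩ => ?_⟩
  show (d A X n φ) s = 0
  have : ∀ i : Fin (n + 2), φ (s ∘ i.succAbove) = 0 :=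
    fun i => hφ _ ⟨u, hu, fun j => hs _⟩
  simp only [d, AddMonoidHom.mk'_apply]
  exact Finset.sum_eq_zero fun i _ => by rw [this i, smul_zero]

/-- The induced differential on the Alexander–Spanier complex. -/
def dQ (X : Type*) [TopologicalSpace X] (n : ℕ) : QC A X n →+ QC A X (n + 1) :=
  QuotientAddGroup.map _ _ (d A X n) (d_locZero A X n)

/-- Cocycles. -/
def cocycles (X : Type*) [TopologicalSpace X] (n : ℕ) : AddSubgroup (QC A X n) :=
  (dQ A X n).ker

/-- Coboundaries (the trivial subgroup in degree `0`). -/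
def cobounds (X : Type*) [TopologicalSpace X] (n : ℕ) : AddSubgroup (QC A X n) :=
  match n with
  | 0 => ⊥
  | (m + 1) => (dQ A X m).range

/-- Alexander–Spanier cohomology of `X` with coefficients in `A`; for paracompact Hausdorff
(e.g. metric) spaces this is naturally isomorphic to Čech cohomology. -/
def ASH (n : ℕ) (X : Type*) [TopologicalSpace X] : Type _ :=
  ↥(cocycles A X n) ⧸ ((cobounds A X n).comap (cocycles A X n).subtype)

instance (n : ℕ) (X : Type*) [TopologicalSpace X] : AddCommGroup (ASH A n X) :=
  inferInstanceAs (AddCommGroup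
    (↥(cocycles A X n) ⧸ ((cobounds A X n).comap (cocycles A X n).subtype)))

end AS

namespace AS

variable (A : Type*) [AddCommGroup A]

/-- Pullback of Alexander–Spanier cochains along a map. -/
def pull {X Y : Type*} (f : X → Y) (n : ℕ) : Cochain A Y n →+ Cochain A X n :=
  AddMonoidHom.mk' (fun φ s => φ (f ∘ s)) (fun φ ψ => rfl)

lemma pull_d {X Y : Type*} (f : X → Y) (n : ℕ) (φ : Cochain A Y n) :
    pull A f (n + 1) (d A Y n φ) = d A X n (pull A f n φ) := rfl

lemma pull_locZero {X Y : Type*} [TopologicalSpace X] [TopologicalSpace Y] {f : X → Y}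
    (hf : Continuous f) (n : ℕ) :
    locZero A Y n ≤ (locZero A X n).comap (pull A f n) := by
  rintro φ ⟨U, ⟨hUo, hUc⟩, hφ⟩
  refine ⟨(f ⁻¹' ·) '' U, ⟨?_, ?_⟩, ?_⟩
  · rintro _ ⟨u, hu, rfl⟩
    exact (hUo u hu).preimage hf
  · apply eq_univ_of_forall
    intro x
    have : f x ∈ ⋃₀ U := hUc ▸ mem_univ _
    obtain ⟨u, hu, hx⟩ := this
    exact ⟨f ⁻¹' u, ⟨u, hu, rfl⟩, hx⟩
  · rintro s ⟨_, ⟨u, hu, rfl⟩, hs⟩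
    exact hφ _ ⟨u, hu, fun i => hs i⟩

/-- Pullback on the Alexander–Spanier complex. -/
def pullQ {X Y : Type*} [TopologicalSpace X] [TopologicalSpace Y] {f : X → Y}
    (hf : Continuous f) (n : ℕ) : QC A Y n →+ QC A X n :=
  QuotientAddGroup.map _ _ (pull A f n) (pull_locZero A hf n)

lemma pullQ_d {X Y : Type*} [TopologicalSpace X] [TopologicalSpace Y] {f : X → Y}
    (hf : Continuous f) (n : ℕ) (x : QC A Y n) :
    pullQ A hf (n + 1) (dQ A Y n x) = dQ A X n (pullQ A hf n x) := by
  refine QuotientAddGroup.induction_on x ?_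
  intro φ
  simp only [pullQ, dQ, QuotientAddGroup.map_mk, pull_d]

lemma pullQ_cocycles {X Y : Type*} [TopologicalSpace X] [TopologicalSpace Y] {f : X → Y}
    (hf : Continuous f) (n : ℕ) {x : QC A Y n} (hx : x ∈ cocycles A Y n) :
    pullQ A hf n x ∈ cocycles A X n := by
  have : dQ A Y n x = 0 := hx
  show dQ A X n (pullQ A hf n x) = 0
  rw [← pullQ_d, this, map_zero]

lemma pullQ_cobounds {X Y : Type*} [TopologicalSpace X] [TopologicalSpace Y] {f : X → Y}
    (hf : Continuous f) (n : ℕ) {x : QC A Y n} (hx : x ∈ cobounds A Y n) :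
    pullQ A hf n x ∈ cobounds A X n := by
  match n with
  | 0 =>
    have : x = 0 := hx
    rw [this, map_zero]
    exact (⊥ : AddSubgroup (QC A X 0)).zero_mem
  | (m + 1) =>
    obtain ⟨y, rfl⟩ := hx
    exact ⟨pullQ A hf m y, (pullQ_d A hf m y).symm⟩

/-- The map on cocycles induced by a continuous map. -/
def pullZ {X Y : Type*} [TopologicalSpace X] [TopologicalSpace Y] {f : X → Y}
    (hf : Continuous f) (n : ℕ) : ↥(cocycles A Y n) →+ ↥(cocycles A X n) :=
  AddMonoidHom.codRestrict ((pullQ A hf n).comp (cocycles A Y n).subtype) _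
    (fun x => pullQ_cocycles A hf n x.2)

/-- The homomorphism induced on Alexander–Spanier (Čech) cohomology by a continuous map.
Note the contravariance: a map `f : X → Y` induces `ASHmap : ASH A n Y →+ ASH A n X`. -/
def ASHmap {X Y : Type*} [TopologicalSpace X] [TopologicalSpace Y] {f : X → Y}
    (hf : Continuous f) (n : ℕ) : ASH A n Y →+ ASH A n X :=
  QuotientAddGroup.map _ _ (pullZ A hf n) (by
    rintro ⟨x, hx⟩ hmem
    have : x ∈ cobounds A Y n := hmem
    exact pullQ_cobounds A hf n this)

end AS

namespace AS

variable (A : Type*) [AddCommGroup A]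

/-- Čech cohomology with compact supports: for compact `B` this is the (Alexander–Spanier =
Čech) cohomology of `B` itself, and for noncompact `B` it is that of the one-point
compactification of `B`. -/
def Hc (n : ℕ) (B : Type*) [TopologicalSpace B] : Type _ :=
  open scoped Classical in
  if CompactSpace B then ASH A n B else ASH A n (OnePoint B)

end AS

/-- The cohomological dimension `dim_A X` of a space `X` with respect to an abelian group `A`:
the supremum of the integers `n` for which there is a locally compact subset `B ⊆ X` with
`H^n_c(B; A) ≠ 0`. -/
noncomputable def cohDim (A : Type*) [AddCommGroup A] (X : Type*) [TopologicalSpace X] : ℕ∞ :=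
  sSup {e : ℕ∞ | ∃ n : ℕ, e = (n : ℕ∞) ∧
    ∃ B : Set X, LocallyCompactSpace B ∧ Nontrivial (AS.Hc A n B)}

/-!
Map `X` to `Y × ℝ^J` by `f` and finitely many bump functions whose small supports cover `X`. As the
fibres of `f` are zero-dimensional, each bump function `u` can be chosen two-valued over `Y`:
pointwise `u = 0` or `u = ρ ∘ f`, for a continuous `ρ`. Peeling off the closed sets on which a
coordinate vanishes filters the image of a compact pair by compact sets whose successive differences
are graphs over locally compact subsets of `Y`. By excision and the exact sequence of a triple the
vanishing of `H^n_c` for these subsets yields a cobounding over the image. It pulls back to `X`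
because the fibres of the map are small and Alexander–Spanier cochains can be pulled back along
discontinuous functions: a set-theoretic section is a homotopy inverse, by the prism operator.
-/

namespace AS

open Filter Topology

variable {A : Type*} [AddCommGroup A] {X M N : Type*} {n : ℕ}

/-! ### Cones and prisms -/

lemma d_apply (φ : Cochain A M n) (s : Fin (n + 2) → M) :
    d A M n φ s = ∑ i : Fin (n + 2), ((-1 : ℤ) ^ (i : ℕ)) • φ (s ∘ i.succAbove) := rfl

lemma pull_apply (p : X → M) (φ : Cochain A M n) (s : Fin (n + 1) → X) :
    pull A p n φ s = φ (p ∘ s) := rfl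

/-- The cone operator with apex `t`, a contraction of the Alexander–Spanier cochain complex. -/
def cone (t : M) (n : ℕ) : Cochain A M (n + 1) →+ Cochain A M n :=
  AddMonoidHom.mk' (fun φ s => φ (Fin.cons t s)) fun _ _ => rfl

lemma cone_apply (t : M) (φ : Cochain A M (n + 1)) (s : Fin (n + 1) → M) :
    cone t n φ s = φ (Fin.cons t s) := rfl

lemma eq_zero_of_forall_cone {φ : Cochain A M (n + 1)} (h : ∀ t, cone t n φ = 0) : φ = 0 := by
  funext s
  rw [← Fin.cons_self_tail s]
  exact congrFun (h (s 0)) (Fin.tail s)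

lemma cons_comp_succ (t : M) (s : Fin n → M) :
    (Fin.cons t s : Fin (n + 1) → M) ∘ Fin.succ = s :=
  funext fun j => by simp only [comp_apply, Fin.cons_succ]

lemma cons_comp_succ_succAbove (t : M) (s : Fin (n + 1) → M) (i : Fin (n + 1)) :
    (Fin.cons t s : Fin (n + 2) → M) ∘ i.succ.succAbove =
      (Fin.cons t (s ∘ i.succAbove) : Fin (n + 1) → M) := by
  funext j
  refine Fin.cases ?_ (fun j => ?_) j <;> simp

lemma cone_d_zero (t : M) (φ : Cochain A M 0) :
    cone t 0 (d A M 0 φ) = φ - fun _ => φ fun _ => t := by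
  funext s
  have hlast : (Fin.cons t s : Fin 2 → M) ∘ Fin.succAbove 1 = fun _ => t := by
    funext j
    fin_cases j
    rfl
  rw [cone_apply, d_apply, Fin.sum_univ_two, Fin.succAbove_zero, cons_comp_succ, hlast]
  simp [sub_eq_add_neg]

lemma cone_d (t : M) (φ : Cochain A M (n + 1)) :
    cone t (n + 1) (d A M (n + 1) φ) = φ - d A M n (cone t n φ) := by
  funext s
  simp only [Pi.sub_apply, cone_apply, d_apply]
  rw [Fin.sum_univ_succ (n := n + 2)]
  simp only [cons_comp_succ_succAbove, Fin.succAbove_zero, cons_comp_succ, Fin.val_zero, pow_zero,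
    one_smul, Fin.val_succ, pow_succ, mul_neg, mul_one, neg_smul, Finset.sum_neg_distrib]
  abel

lemma d_const_zero (a : A) : d A M 0 (fun _ => a) = 0 := by
  funext s
  simp [d_apply, Fin.sum_univ_succ]

lemma d_d (φ : Cochain A M n) : d A M (n + 1) (d A M n φ) = 0 := by
  induction n with
  | zero =>
    refine eq_zero_of_forall_cone fun t => ?_
    rw [cone_d, cone_d_zero, map_sub, d_const_zero, sub_zero, sub_self]
  | succ n ih =>
    refine eq_zero_of_forall_cone fun t => ?_
    rw [cone_d, cone_d, map_sub, ih, sub_zero, sub_self]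

/-- The prism operator, a cochain homotopy between the identity and the pullback along a function
`r`. Since no continuity is required of `r`, it exists by the acyclic carrier argument: in degree
`n + 1` it is defined by coning off the defect of the homotopy in degree `n`. -/
def prism (r : M → M) : (n : ℕ) → Cochain A M (n + 1) →+ Cochain A M n
  | 0 => AddMonoidHom.mk'
      (fun φ s => (pull A r 0 (cone (s 0) 0 φ) - cone (s 0) 0 φ) s)
      fun _ _ => funext fun s => by simp only [map_add, Pi.add_apply, Pi.sub_apply]; abel
  | n + 1 => AddMonoidHom.mk'
      (fun φ s => (pull A r (n + 1) (cone (s 0) (n + 1) φ) - cone (s 0) (n + 1) φ -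
        d A M n (prism r n (cone (s 0) (n + 1) φ))) s)
      fun _ _ => funext fun s => by simp only [map_add, Pi.add_apply, Pi.sub_apply]; abel

lemma prism_zero_apply (r : M → M) (φ : Cochain A M 1) (s : Fin 1 → M) :
    prism r 0 φ s = (pull A r 0 (cone (s 0) 0 φ) - cone (s 0) 0 φ) s := rfl

lemma prism_succ_apply (r : M → M) (φ : Cochain A M (n + 2)) (s : Fin (n + 2) → M) :
    prism r (n + 1) φ s = (pull A r (n + 1) (cone (s 0) (n + 1) φ) - cone (s 0) (n + 1) φ -
      d A M n (prism r n (cone (s 0) (n + 1) φ))) s := rfl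

lemma prism_d_zero (r : M → M) (φ : Cochain A M 0) :
    prism r 0 (d A M 0 φ) = pull A r 0 φ - φ := by
  funext s
  rw [prism_zero_apply, cone_d_zero]
  simp only [pull_apply, Pi.sub_apply, sub_sub_sub_cancel_right]

lemma prism_d_apply (r : M → M) (φ : Cochain A M (n + 1)) (s : Fin (n + 2) → M) :
    prism r (n + 1) (d A M (n + 1) φ) s = (pull A r (n + 1) φ - φ - d A M n (prism r n φ)) s -
      d A M n (pull A r n (cone (s 0) n φ) - cone (s 0) n φ -
        prism r n (d A M n (cone (s 0) n φ))) s := by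
  simp only [prism_succ_apply, cone_d, map_sub, ← pull_d, Pi.sub_apply]
  abel

lemma prism_d (r : M → M) (φ : Cochain A M (n + 1)) :
    prism r (n + 1) (d A M (n + 1) φ) = pull A r (n + 1) φ - φ - d A M n (prism r n φ) := by
  induction n with
  | zero =>
    funext s
    rw [prism_d_apply, prism_d_zero, sub_self, map_zero, Pi.zero_apply, sub_zero]
  | succ n ih =>
    funext s
    rw [prism_d_apply, ih, sub_sub_cancel, d_d, Pi.zero_apply, sub_zero]

lemma sub_d_pull_sub_prism (q : X → M) (σ : M → X) (φ : Cochain A X (n + 1))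
    (ψ : Cochain A M n) :
    φ - d A X n (pull A q n ψ - prism (σ ∘ q) n φ) =
      pull A q (n + 1) (pull A σ (n + 1) φ - d A M n ψ) -
        prism (σ ∘ q) (n + 1) (d A X (n + 1) φ) := by
  have hcomp : pull A q (n + 1) (pull A σ (n + 1) φ) = pull A (σ ∘ q) (n + 1) φ := rfl
  rw [prism_d, map_sub, map_sub, ← pull_d, hcomp]
  abel

/-! ### Cochains vanishing along a filter -/

variable (A) in
/-- The group of cochains which vanish on all tuples of points of some member of the filter `l`. For
`l = 𝓝[C] x` these are the cochains vanishing on `C` near `x`, and for `l = 𝓝ˢ[C] D` those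
vanishing on `C` near `D`. -/
def vanishing (l : Filter M) (n : ℕ) : AddSubgroup (Cochain A M n) where
  carrier := {φ | ∃ V ∈ l, ∀ s, (∀ i, s i ∈ V) → φ s = 0}
  zero_mem' := ⟨univ, univ_mem, fun _ _ => rfl⟩
  add_mem' := by
    rintro φ ψ ⟨V, hV, hφ⟩ ⟨W, hW, hψ⟩
    refine ⟨V ∩ W, inter_mem hV hW, fun s hs => ?_⟩
    rw [Pi.add_apply, hφ s fun i => (hs i).1, hψ s fun i => (hs i).2, add_zero]
  neg_mem' := by
    rintro φ ⟨V, hV, hφ⟩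
    exact ⟨V, hV, fun s hs => by rw [Pi.neg_apply, hφ s hs, neg_zero]⟩

lemma mem_vanishing_principal {V : Set M} {φ : Cochain A M n} :
    φ ∈ vanishing A (𝓟 V) n ↔ ∀ s, (∀ i, s i ∈ V) → φ s = 0 :=
  ⟨fun ⟨_, hW, hφ⟩ s hs => hφ s fun i => hW (hs i), fun hφ => ⟨V, mem_principal_self V, hφ⟩⟩

lemma mem_vanishing_iff {l : Filter M} {φ : Cochain A M n} :
    φ ∈ vanishing A l n ↔ ∃ V ∈ l, φ ∈ vanishing A (𝓟 V) n := by
  simp only [mem_vanishing_principal]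
  rfl

lemma vanishing_mono {l l' : Filter M} (h : l ≤ l') : vanishing A l' n ≤ vanishing A l n :=
  fun _ ⟨V, hV, hφ⟩ => ⟨V, h hV, hφ⟩

lemma mem_vanishing_inf_principal_iff {l : Filter M} {C : Set M} {φ : Cochain A M n} :
    φ ∈ vanishing A (l ⊓ 𝓟 C) n ↔ ∃ V ∈ l, φ ∈ vanishing A (𝓟 (V ∩ C)) n := by
  refine ⟨fun ⟨V, hV, hφ⟩ => ⟨_, mem_inf_principal.1 hV, ?_⟩, fun ⟨V, hV, hφ⟩ => ?_⟩
  · exact mem_vanishing_principal.2 fun s hs => hφ s fun i => (hs i).1 (hs i).2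
  · exact vanishing_mono (le_principal_iff.2 (inter_mem_inf hV (mem_principal_self C))) hφ

lemma vanishing_bot : vanishing A (⊥ : Filter M) n = ⊤ :=
  eq_top_iff.2 fun _ _ => ⟨∅, mem_bot, fun _ hs => (hs 0).elim⟩

lemma d_mem_vanishing {l : Filter M} {φ : Cochain A M n} (hφ : φ ∈ vanishing A l n) :
    d A M n φ ∈ vanishing A l (n + 1) := by
  obtain ⟨V, hV, hφ⟩ := hφ
  refine ⟨V, hV, fun s hs => ?_⟩
  rw [d_apply]
  exact Finset.sum_eq_zero fun i _ => by rw [hφ (s ∘ i.succAbove) fun j => hs _, smul_zero]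

lemma pull_mem_vanishing {l : Filter X} {l' : Filter M} {p : X → M} (hp : Tendsto p l l')
    {φ : Cochain A M n} (hφ : φ ∈ vanishing A l' n) : pull A p n φ ∈ vanishing A l n := by
  obtain ⟨V, hV, hφ⟩ := hφ
  exact ⟨p ⁻¹' V, hp hV, fun s hs => hφ (p ∘ s) hs⟩

lemma cone_mem_vanishing {l : Filter M} {t : M} (ht : pure t ≤ l) {φ : Cochain A M (n + 1)}
    (hφ : φ ∈ vanishing A l (n + 1)) : cone t n φ ∈ vanishing A l n := by
  obtain ⟨V, hV, hφ⟩ := hφ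
  exact ⟨V, hV, fun s hs => hφ _ (Fin.cases (mem_pure.1 (ht hV)) hs)⟩

lemma prism_mem_vanishing_principal (r : M → M) {V : Set M} {φ : Cochain A M (n + 1)}
    (hφ : φ ∈ vanishing A (𝓟 V) (n + 1)) : prism r n φ ∈ vanishing A (𝓟 (V ∩ r ⁻¹' V)) n := by
  have hid : 𝓟 (V ∩ r ⁻¹' V) ≤ 𝓟 V := principal_mono.2 inter_subset_left
  have hr : Tendsto r (𝓟 (V ∩ r ⁻¹' V)) (𝓟 V) :=
    tendsto_principal_principal.2 fun x hx => hx.2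
  refine mem_vanishing_principal.2 fun s hs => ?_
  have hs0 : pure (s 0) ≤ 𝓟 V := (pure_le_principal _).2 (hs 0).1
  induction n with
  | zero =>
    have hc := cone_mem_vanishing hs0 hφ
    exact mem_vanishing_principal.1
      (sub_mem (pull_mem_vanishing hr hc) (vanishing_mono hid hc)) s hs
  | succ n ih =>
    have hc := cone_mem_vanishing hs0 hφ
    have hprism := mem_vanishing_principal.2 fun s hs =>
      ih hc s hs ((pure_le_principal _).2 (hs 0).1)
    exact mem_vanishing_principal.1 (sub_mem
      (sub_mem (pull_mem_vanishing hr hc) (vanishing_mono hid hc)) (d_mem_vanishing hprism)) s hs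

lemma prism_mem_vanishing {l l' : Filter M} {r : M → M} (hl : l ≤ l') (hr : Tendsto r l l')
    {φ : Cochain A M (n + 1)} (hφ : φ ∈ vanishing A l' (n + 1)) :
    prism r n φ ∈ vanishing A l n := by
  obtain ⟨V, hV, hφ⟩ := mem_vanishing_iff.1 hφ
  exact vanishing_mono (le_principal_iff.2 (inter_mem (hl hV) (hr hV)))
    (prism_mem_vanishing_principal r hφ)

lemma pull_sub_prism_mem_vanishing {q : X → M} {σ : M → X} {l l' : Filter X} {k : Filter M}
    (hl : l ≤ l') (hσq : Tendsto (σ ∘ q) l l') (hq : Tendsto q l k) {φ : Cochain A X (n + 1)}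
    (hφ : φ ∈ vanishing A l' (n + 1)) {ψ : Cochain A M n} (hψ : ψ ∈ vanishing A k n) :
    pull A q n ψ - prism (σ ∘ q) n φ ∈ vanishing A l n :=
  sub_mem (pull_mem_vanishing hq hψ) (prism_mem_vanishing hl hσq hφ)

lemma sub_d_pull_sub_prism_mem_vanishing {q : X → M} {σ : M → X} {l l' : Filter X}
    {k : Filter M} (hl : l ≤ l') (hσq : Tendsto (σ ∘ q) l l') (hq : Tendsto q l k)
    {φ : Cochain A X (n + 1)} (hφ : d A X (n + 1) φ ∈ vanishing A l' (n + 2))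
    {ψ : Cochain A M n} (hψ : pull A σ (n + 1) φ - d A M n ψ ∈ vanishing A k (n + 1)) :
    φ - d A X n (pull A q n ψ - prism (σ ∘ q) n φ) ∈ vanishing A l (n + 1) := by
  rw [sub_d_pull_sub_prism]
  exact pull_sub_prism_mem_vanishing hl hσq hq hφ hψ

/-- The extension by zero of the restriction of a cochain to tuples of points of `S`. It serves to
modify a cochain near a closed set. -/
def cutoff (S : Set M) (φ : Cochain A M n) : Cochain A M n := indicator {s | ∀ i, s i ∈ S} φ

lemma sub_cutoff_mem_vanishing (S : Set M) (φ : Cochain A M n) :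
    φ - cutoff S φ ∈ vanishing A (𝓟 S) n :=
  mem_vanishing_principal.2 fun s hs => by
    rw [Pi.sub_apply, cutoff, indicator_of_mem (mem_ofPred.2 hs), sub_self]

lemma cutoff_mem_vanishing_of_compl_mem {l : Filter M} {S : Set M} (hS : Sᶜ ∈ l)
    (φ : Cochain A M n) : cutoff S φ ∈ vanishing A l n :=
  ⟨Sᶜ, hS, fun _ hs => indicator_apply_eq_zero.2 fun h => absurd (mem_ofPred.1 h 0) (hs 0)⟩

lemma cutoff_mem_vanishing {l : Filter M} (S : Set M) {φ : Cochain A M n}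
    (hφ : φ ∈ vanishing A l n) : cutoff S φ ∈ vanishing A l n := by
  obtain ⟨V, hV, hφ⟩ := hφ
  exact ⟨V, hV, fun s hs => indicator_apply_eq_zero.2 fun _ => hφ s hs⟩

/-! ### Relative acyclicity and excision -/

section RelAcyclic

variable [TopologicalSpace M] [TopologicalSpace N]

variable (A) in
/-- The group of cochains which vanish on `C` near every point of `C`, that is, represent zero in
the Alexander–Spanier complex of `C`. -/
def locVanishing (C : Set M) (n : ℕ) : AddSubgroup (Cochain A M n) :=
  ⨅ x ∈ C, vanishing A (𝓝[C] x) n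

variable (A) in
/-- Vanishing of the relative Alexander–Spanier cohomology of the pair `(C, D)` in degree `n + 1`.
Relative cochains are cochains of the ambient space vanishing on `C` near `D`, and two of them are
identified if they agree on `C` near every point of `C`. -/
def RelAcyclic (n : ℕ) (C D : Set M) : Prop :=
  ∀ φ ∈ vanishing A (𝓝ˢ[C] D) (n + 1), d A M (n + 1) φ ∈ locVanishing A C (n + 2) →
    ∃ ψ ∈ vanishing A (𝓝ˢ[C] D) n, φ - d A M n ψ ∈ locVanishing A C (n + 1)

variable {C D E : Set M} {C' D' : Set N} {φ : Cochain A M n} {x : M}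

lemma mem_locVanishing :
    φ ∈ locVanishing A C n ↔ ∀ x ∈ C, φ ∈ vanishing A (𝓝[C] x) n := by
  simp only [locVanishing, AddSubgroup.mem_iInf]

lemma d_mem_locVanishing (hφ : φ ∈ locVanishing A C n) :
    d A M n φ ∈ locVanishing A C (n + 1) :=
  mem_locVanishing.2 fun x hx => d_mem_vanishing (mem_locVanishing.1 hφ x hx)

lemma locVanishing_anti (hDC : D ⊆ C) : locVanishing A C n ≤ locVanishing A D n :=
  fun _ hφ => mem_locVanishing.2 fun x hx =>
    vanishing_mono (nhdsWithin_mono x hDC) (mem_locVanishing.1 hφ x (hDC hx))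

lemma nhdsWithin_le_nhdsSetWithin (hx : x ∈ D) : 𝓝[C] x ≤ 𝓝ˢ[C] D :=
  nhdsSetWithin_singleton (x := x) ▸ nhdsSetWithin_mono_left (singleton_subset_iff.2 hx)

lemma mem_locVanishing_of_near (hD : φ ∈ vanishing A (𝓝ˢ[C] D) n)
    (hCD : ∀ x ∈ C \ D, φ ∈ vanishing A (𝓝[C] x) n) : φ ∈ locVanishing A C n :=
  mem_locVanishing.2 fun x hx => by
    by_cases hxD : x ∈ D
    · exact vanishing_mono (nhdsWithin_le_nhdsSetWithin hxD) hD
    · exact hCD x ⟨hx, hxD⟩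

lemma isOpen_setOf_mem_vanishing (C : Set M) (φ : Cochain A M n) :
    IsOpen {x | φ ∈ vanishing A (𝓝[C] x) n} := by
  refine isOpen_iff_mem_nhds.2 fun x ⟨V, hV, hφ⟩ => ?_
  filter_upwards [eventually_nhds_nhdsWithin.2 hV] with y hy using ⟨V, hy, hφ⟩

lemma exists_sub_mem_vanishing_nhdsSetWithin [RegularSpace M] (hD : IsCompact D)
    (hφ : ∀ x ∈ D, φ ∈ vanishing A (𝓝[C] x) n) :
    ∃ θ ∈ locVanishing A C n, φ - θ ∈ vanishing A (𝓝ˢ[C] D) n := by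
  obtain ⟨V, hVo, hDV, hV⟩ := hD.exists_isOpen_closure_subset
    ((isOpen_setOf_mem_vanishing C φ).mem_nhdsSet.2 hφ)
  refine ⟨cutoff V φ, mem_locVanishing.2 fun x _ => ?_, vanishing_mono ?_
    (sub_cutoff_mem_vanishing V φ)⟩
  · by_cases hx : x ∈ closure V
    · exact cutoff_mem_vanishing V (hV hx)
    · refine cutoff_mem_vanishing_of_compl_mem (mem_nhdsWithin_of_mem_nhds ?_) φ
      exact mem_of_superset (isClosed_closure.isOpen_compl.mem_nhds hx)
        (compl_subset_compl.2 subset_closure)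
  · exact inf_le_of_left_le (le_principal_iff.2 (hVo.mem_nhdsSet.2 hDV))

/-- A function which behaves like a map of pairs `(C, D) → (C', D')` for the purposes of relative
cohomology: continuity is required on `C \ D` only, and replaced by a neighbourhood condition
along `D`. -/
structure IsRelMap (p : M → N) (C D : Set M) (C' D' : Set N) : Prop where
  mapsTo : MapsTo p C C'
  continuousWithinAt : ∀ x ∈ C \ D, ContinuousWithinAt p C x
  tendsto : Tendsto p (𝓝ˢ[C] D) (𝓝ˢ[C'] D')

lemma IsRelMap.pull_mem_locVanishing {p : M → N} (hp : IsRelMap p C D C' D')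
    {φ : Cochain A N n} (hφ : φ ∈ locVanishing A C' n) (hφD : φ ∈ vanishing A (𝓝ˢ[C'] D') n) :
    pull A p n φ ∈ locVanishing A C n :=
  mem_locVanishing_of_near (pull_mem_vanishing hp.tendsto hφD) fun x hx =>
    pull_mem_vanishing ((hp.continuousWithinAt x hx).tendsto_nhdsWithin hp.mapsTo)
      (mem_locVanishing.1 hφ (p x) (hp.mapsTo hx.1))

lemma RelAcyclic.of_isRelMap {p : M → N} {e : N → M} (hp : IsRelMap p C D C' D')
    (he : IsRelMap e C' D' C D) (hD : IsClosed D) (hep : LeftInvOn e p (C \ D))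
    (h : RelAcyclic A n C' D') : RelAcyclic A n C D := by
  intro φ hφD hφ
  have heφD := pull_mem_vanishing he.tendsto hφD
  obtain ⟨ψ, hψD, hψ⟩ := h (pull A e (n + 1) φ) heφD
    (he.pull_mem_locVanishing hφ (d_mem_vanishing hφD))
  refine ⟨pull A p n ψ, pull_mem_vanishing hp.tendsto hψD, ?_⟩
  have hretract : φ - pull A p (n + 1) (pull A e (n + 1) φ) ∈ locVanishing A C (n + 1) := by
    refine mem_locVanishing_of_near (sub_mem hφD (pull_mem_vanishing hp.tendsto heφD))
      fun x hx => vanishing_mono (l' := 𝓟 (C \ D)) ?_ (mem_vanishing_principal.2 fun s hs => ?_)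
    · exact le_principal_iff.2 (inter_mem_nhdsWithin C (hD.isOpen_compl.mem_nhds hx.2))
    · have hs : e ∘ p ∘ s = s := funext fun i => hep (hs i)
      rw [Pi.sub_apply, pull_apply, pull_apply, hs, sub_self]
  have hpullback := hp.pull_mem_locVanishing hψ (sub_mem heφD (d_mem_vanishing hψD))
  rw [map_sub, pull_d] at hpullback
  rw [← sub_add_sub_cancel]
  exact add_mem hretract hpullback

/-! ### Disjoint unions and triples -/

lemma nhdsWithin_union_of_notMem (hD : IsClosed D) (hx : x ∉ D) : 𝓝[C ∪ D] x = 𝓝[C] x := by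
  rw [nhdsWithin_union, (notMem_closure_iff_nhdsWithin_eq_bot (s := D)).1 (by rwa [hD.closure_eq]),
    sup_bot_eq]

lemma relAcyclic_union_iff_of_disjoint (hC : IsClosed C) (hD : IsClosed D) (hCD : Disjoint C D) :
    RelAcyclic A n (C ∪ D) D ↔ RelAcyclic A n C ∅ := by
  have hcut {k : ℕ} (φ : Cochain A M k) : cutoff C φ ∈ vanishing A (𝓝ˢ[C ∪ D] D) k :=
    cutoff_mem_vanishing_of_compl_mem
      (mem_inf_of_left (hC.isOpen_compl.mem_nhdsSet.2 hCD.subset_compl_left)) φ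
  have hsub {k : ℕ} (φ : Cochain A M k) : φ - cutoff C φ ∈ locVanishing A C k :=
    mem_locVanishing.2 fun _ _ =>
      vanishing_mono (le_principal_iff.2 self_mem_nhdsWithin) (sub_cutoff_mem_vanishing C φ)
  have hloc {k : ℕ} {φ : Cochain A M k} (hφD : φ ∈ vanishing A (𝓝ˢ[C ∪ D] D) k)
      (hφ : φ ∈ locVanishing A C k) : φ ∈ locVanishing A (C ∪ D) k :=
    mem_locVanishing_of_near hφD fun x hx => by
      rw [nhdsWithin_union_of_notMem hD hx.2]
      exact mem_locVanishing.1 hφ x (hx.1.resolve_right hx.2)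
  constructor
  · intro h φ _ hdφ
    have hdcut : d A M (n + 1) (cutoff C φ) ∈ locVanishing A C (n + 2) := by
      have := sub_mem hdφ (d_mem_locVanishing (hsub φ))
      rwa [map_sub, sub_sub_cancel] at this
    obtain ⟨ψ, -, hψ⟩ := h (cutoff C φ) (hcut φ) (hloc (d_mem_vanishing (hcut φ)) hdcut)
    refine ⟨ψ, by simp [vanishing_bot], ?_⟩
    rw [← sub_add_sub_cancel]
    exact add_mem (hsub φ) (locVanishing_anti subset_union_left hψ)
  · intro h φ hφD hdφ
    obtain ⟨ψ, -, hψ⟩ := h φ (by simp [vanishing_bot]) (locVanishing_anti subset_union_left hdφ)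
    refine ⟨cutoff C ψ, hcut ψ, hloc (sub_mem hφD (d_mem_vanishing (hcut ψ))) ?_⟩
    rw [← sub_add_sub_cancel, ← map_sub]
    exact add_mem hψ (d_mem_locVanishing (hsub ψ))

lemma exists_approx_retraction [CompletelyRegularSpace M] (hD : IsCompact D) (hne : D.Nonempty)
    {W : M → Set M} (hW : ∀ z ∈ D, W z ∈ 𝓝 z) :
    ∃ r : M → M, (∀ x, r x ∈ D) ∧ ∀ x ∈ D, ∃ z ∈ D, W z ∈ 𝓝 x ∧ r ⁻¹' W z ∈ 𝓝 x := by
  obtain ⟨_, rfl⟩ := CompletelyRegularSpace.exists_uniformSpace (X := M)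
  obtain ⟨U, hU, hball⟩ := lebesgue_number_lemma_nhds' (U := fun z _ => W z) hD hW
  obtain ⟨U', hU', hsymm, hUU'⟩ := comp_symm_mem_uniformity_sets hU
  have hproj (x : M) : ∃ y ∈ D, (∃ z ∈ D, (x, z) ∈ U') → (x, y) ∈ U' := by
    by_cases hx : ∃ z ∈ D, (x, z) ∈ U'
    · exact ⟨hx.choose, hx.choose_spec.1, fun _ => hx.choose_spec.2⟩
    · exact ⟨hne.some, hne.some_mem, fun h => absurd h hx⟩
  choose r hrD hr using hproj
  refine ⟨r, hrD, fun x hx => ?_⟩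
  obtain ⟨z, hz⟩ := hball x hx
  refine ⟨z, z.2, mem_of_superset (UniformSpace.ball_mem_nhds x hU) hz, ?_⟩
  filter_upwards [UniformSpace.ball_mem_nhds x hU'] with y hxy
  exact hz (hUU' ⟨y, hxy, hr y ⟨x, hx, UniformSpace.mem_ball_symmetry.1 hxy⟩⟩)

lemma exists_mem_nhds_subset_of_inter_nonempty (hE : IsClosed E) {V : Set M} (hV : V ∈ 𝓝ˢ E)
    (x : M) : ∃ U ∈ 𝓝 x, (U ∩ E).Nonempty → U ⊆ V := by
  by_cases hx : x ∈ E
  · exact ⟨V, mem_nhdsSet_iff_forall.1 hV x hx, fun _ => subset_rfl⟩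
  · exact ⟨Eᶜ, hE.isOpen_compl.mem_nhds hx, fun ⟨_, hy, hyE⟩ => absurd hyE hy⟩

lemma exists_mem_nhds_mem_vanishing {k : ℕ} (hE : IsClosed E) {V : Set M} (hV : V ∈ 𝓝ˢ E)
    (hφ : φ ∈ vanishing A (𝓝[C] x) n) {ψ : Cochain A M k} (hψ : ψ ∈ vanishing A (𝓝[D] x) k) :
    ∃ W ∈ 𝓝 x, φ ∈ vanishing A (𝓟 (W ∩ C)) n ∧ ψ ∈ vanishing A (𝓟 (W ∩ D)) k ∧
      ((W ∩ E).Nonempty → W ⊆ V) := by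
  obtain ⟨W₁, hW₁, hφ⟩ := mem_vanishing_inf_principal_iff.1 hφ
  obtain ⟨W₂, hW₂, hψ⟩ := mem_vanishing_inf_principal_iff.1 hψ
  obtain ⟨W₃, hW₃, hWE⟩ := exists_mem_nhds_subset_of_inter_nonempty hE hV x
  refine ⟨W₁ ∩ W₂ ∩ W₃, inter_mem (inter_mem hW₁ hW₂) hW₃, vanishing_mono ?_ hφ,
    vanishing_mono ?_ hψ, fun hne => ?_⟩
  · exact principal_mono.2 (inter_subset_inter_left C fun x hx => hx.1.1)
  · exact principal_mono.2 (inter_subset_inter_left D fun x hx => hx.1.2)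
  · exact inter_subset_right.trans (hWE (hne.mono (inter_subset_inter_left E inter_subset_right)))

-- If `r` is an approximate retraction onto `D`, a cobounding `ψ` on `D` extends to the cochain
-- `pull r ψ - prism r φ`.
lemma RelAcyclic.exists_cobounding_near [CompletelyRegularSpace M] (hD : IsCompact D)
    (hE : IsClosed E) (hED : E ⊆ D) (hDC : D ⊆ C) (h : RelAcyclic A n D E)
    {φ : Cochain A M (n + 1)} (hφE : φ ∈ vanishing A (𝓝ˢ[C] E) (n + 1))
    (hdφ : d A M (n + 1) φ ∈ locVanishing A C (n + 2)) :
    ∃ ψ ∈ vanishing A (𝓝ˢ[C] E) n, ∀ x ∈ D, φ - d A M n ψ ∈ vanishing A (𝓝[C] x) (n + 1) := by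
  rcases D.eq_empty_or_nonempty with rfl | hne
  · exact ⟨0, zero_mem _, fun x hx => hx.elim⟩
  obtain ⟨ψ, hψE, hψ⟩ := h φ (vanishing_mono (nhdsSetWithin_mono_right hDC) hφE)
    (locVanishing_anti hDC hdφ)
  obtain ⟨V₁, hV₁, hφV⟩ := mem_vanishing_inf_principal_iff.1 hφE
  obtain ⟨V₂, hV₂, hψV⟩ := mem_vanishing_inf_principal_iff.1 hψE
  have hV : V₁ ∩ V₂ ∈ 𝓝ˢ E := inter_mem hV₁ hV₂
  have hW (z : M) (hz : z ∈ D) : ∃ W ∈ 𝓝 z, d A M (n + 1) φ ∈ vanishing A (𝓟 (W ∩ C)) (n + 2) ∧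
      φ - d A M n ψ ∈ vanishing A (𝓟 (W ∩ D)) (n + 1) ∧ ((W ∩ E).Nonempty → W ⊆ V₁ ∩ V₂) :=
    exists_mem_nhds_mem_vanishing hE hV (mem_locVanishing.1 hdφ z (hDC hz))
      (mem_locVanishing.1 hψ z hz)
  choose! W hWz hWφ hWψ hWE using hW
  obtain ⟨r, hrD, hr⟩ := exists_approx_retraction hD hne hWz
  have hrtendsto {l : Filter M} {S : Set M} (hS : r ⁻¹' S ∈ l) : Tendsto r l (𝓟 (S ∩ D)) :=
    tendsto_principal.2 (mem_of_superset hS fun x hx => ⟨hx, hrD x⟩)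
  have hDC' (S : Set M) : 𝓟 (S ∩ D) ≤ 𝓟 (S ∩ C) :=
    principal_mono.2 (inter_subset_inter_right S hDC)
  refine ⟨pull A r n ψ - prism (id ∘ r) n φ, ?_, fun x hx => ?_⟩
  · have hrV : r ⁻¹' (V₁ ∩ V₂) ∈ 𝓝ˢ E := mem_nhdsSet_iff_forall.2 fun x hx => by
      obtain ⟨z, hz, hWx, hrW⟩ := hr x (hED hx)
      exact mem_of_superset hrW (preimage_mono (hWE z hz ⟨x, mem_of_mem_nhds hWx, hx⟩))
    have hrE := hrtendsto (mem_inf_of_left (g := 𝓟 C) hrV)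
    exact pull_sub_prism_mem_vanishing (q := r) (σ := id)
      (le_principal_iff.2 (inter_mem_inf hV (mem_principal_self C)))
      (hrE.mono_right (hDC' _)) hrE
      (vanishing_mono (principal_mono.2 (inter_subset_inter_left C inter_subset_left)) hφV)
      (vanishing_mono (principal_mono.2 (inter_subset_inter_left D inter_subset_right)) hψV)
  · obtain ⟨z, hz, hWx, hrW⟩ := hr x hx
    have hrx := hrtendsto (mem_inf_of_left (g := 𝓟 C) hrW)
    exact sub_d_pull_sub_prism_mem_vanishing (q := r) (σ := id)
      (le_principal_iff.2 (inter_mem_inf hWx (mem_principal_self C)))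
      (hrx.mono_right (hDC' _)) hrx (hWφ z hz) (hWψ z hz)

lemma RelAcyclic.trans [CompletelyRegularSpace M] (hD : IsCompact D) (hE : IsClosed E)
    (hED : E ⊆ D) (hDC : D ⊆ C) (hCD : RelAcyclic A n C D) (hDE : RelAcyclic A n D E) :
    RelAcyclic A n C E := by
  intro φ hφE hdφ
  obtain ⟨ψ₁, hψ₁E, hψ₁⟩ := hDE.exists_cobounding_near hD hE hED hDC hφE hdφ
  obtain ⟨θ, hθ, hθD⟩ := exists_sub_mem_vanishing_nhdsSetWithin hD hψ₁
  have hdθ : d A M (n + 1) (φ - d A M n ψ₁ - θ) ∈ locVanishing A C (n + 2) := by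
    rw [map_sub, map_sub, d_d, sub_zero]
    exact sub_mem hdφ (d_mem_locVanishing hθ)
  obtain ⟨ψ₂, hψ₂D, hψ₂⟩ := hCD _ hθD hdθ
  refine ⟨ψ₁ + ψ₂, add_mem hψ₁E (vanishing_mono (nhdsSetWithin_mono_left hED) hψ₂D), ?_⟩
  convert add_mem hθ hψ₂ using 1
  rw [map_add]
  abel

end RelAcyclic

/-! ### Comparison with cohomology with compact supports -/

section Comparison

variable {T B : Type*} [TopologicalSpace T] [TopologicalSpace B] [TopologicalSpace M]
  {C D : Set M} {j : B → M}

lemma mem_locZero_iff {φ : Cochain A T n} : φ ∈ locZero A T n ↔ φ ∈ locVanishing A univ n := by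
  simp only [mem_locVanishing, nhdsWithin_univ, mem_univ, true_implies]
  constructor
  · rintro ⟨U, ⟨hUo, hU⟩, hφ⟩ x
    obtain ⟨u, hu, hxu⟩ := mem_sUnion.1 (hU ▸ mem_univ x)
    exact ⟨u, (hUo u hu).mem_nhds hxu, fun s hs => hφ s ⟨u, hu, hs⟩⟩
  · intro h
    refine ⟨{u | IsOpen u ∧ φ ∈ vanishing A (𝓟 u) n}, ⟨fun u hu => hu.1, ?_⟩,
      fun s ⟨u, hu, hs⟩ => mem_vanishing_principal.1 hu.2 s hs⟩
    refine eq_univ_of_forall fun x => ?_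
    obtain ⟨V, hV, hφ⟩ := mem_vanishing_iff.1 (h x)
    exact ⟨interior V, ⟨isOpen_interior, vanishing_mono (principal_mono.2 interior_subset) hφ⟩,
      mem_interior_iff_mem_nhds.2 hV⟩

lemma subsingleton_ASH_iff :
    Subsingleton (ASH A (n + 1) T) ↔ RelAcyclic A n (univ : Set T) ∅ := by
  have hle : Subsingleton (ASH A (n + 1) T) ↔ cocycles A T (n + 1) ≤ cobounds A T (n + 1) := by
    rw [ASH, QuotientAddGroup.subsingleton_iff]
    exact AddSubgroup.addSubgroupOf_eq_top
  have hcocycle {φ : Cochain A T (n + 1)} : (φ : QC A T (n + 1)) ∈ cocycles A T (n + 1) ↔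
      d A T (n + 1) φ ∈ locVanishing A univ (n + 2) :=
    (QuotientAddGroup.eq_zero_iff _).trans mem_locZero_iff
  have hcobound {φ : Cochain A T (n + 1)} {ψ : Cochain A T n} :
      dQ A T n ψ = φ ↔ φ - d A T n ψ ∈ locVanishing A univ (n + 1) := by
    rw [sub_eq_neg_add, ← mem_locZero_iff]
    exact QuotientAddGroup.eq
  rw [hle]
  refine ⟨fun h φ _ hφ => ?_, fun h => QuotientAddGroup.mk_surjective.forall.2 fun φ hφ => ?_⟩
  · obtain ⟨y, hy⟩ := h (hcocycle.2 hφ)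
    obtain ⟨ψ, rfl⟩ := QuotientAddGroup.mk_surjective y
    exact ⟨ψ, by simp [vanishing_bot], hcobound.1 hy⟩
  · obtain ⟨ψ, -, hψ⟩ := h φ (by simp [vanishing_bot]) (hcocycle.1 hφ)
    exact ⟨ψ, hcobound.2 hψ⟩

lemma relAcyclic_singleton_iff (t : T) :
    RelAcyclic A n (univ : Set T) {t} ↔ RelAcyclic A n (univ : Set T) ∅ := by
  have hcone {φ : Cochain A T (n + 1)} (hφ : φ ∈ vanishing A (𝓝[univ] t) (n + 1)) :
      cone t n φ ∈ vanishing A (𝓝ˢ[univ] {t}) n := by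
    rw [nhdsSetWithin_singleton]
    exact cone_mem_vanishing (pure_le_nhdsWithin (mem_univ t)) hφ
  constructor
  · intro h φ _ hdφ
    have hnear : φ - d A T n (cone t n φ) ∈ vanishing A (𝓝ˢ[univ] {t}) (n + 1) := by
      rw [← cone_d, nhdsSetWithin_singleton]
      exact cone_mem_vanishing (pure_le_nhdsWithin (mem_univ t))
        (mem_locVanishing.1 hdφ t (mem_univ t))
    obtain ⟨ψ, -, hψ⟩ := h _ hnear (by rwa [map_sub, d_d, sub_zero])
    exact ⟨cone t n φ + ψ, by simp [vanishing_bot], by rwa [map_add, ← sub_sub]⟩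
  · intro h φ hφt hdφ
    obtain ⟨ψ, -, hψ⟩ := h φ (by simp [vanishing_bot]) hdφ
    rw [nhdsSetWithin_singleton] at hφt
    refine ⟨cone t n (d A T n ψ), hcone ?_, ?_⟩
    · simpa only [sub_sub_cancel] using sub_mem hφt (mem_locVanishing.1 hψ t (mem_univ t))
    · rwa [show d A T n (cone t n (d A T n ψ)) = d A T n ψ by
        rw [← sub_eq_zero, ← neg_sub, ← cone_d, d_d, map_zero, neg_zero]]

lemma continuousWithinAt_extend (hj : IsEmbedding j) {g : B → T} {g' : M → T} {b : B}
    (hg : ContinuousAt g b) : ContinuousWithinAt (extend j g g') (range j) (j b) := by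
  rw [ContinuousWithinAt, ← hj.map_nhds_eq, tendsto_map'_iff, extend_comp hj.injective,
    hj.injective.extend_apply]
  exact hg

lemma relAcyclic_range_iff (hj : IsEmbedding j) :
    RelAcyclic A n (range j) ∅ ↔ RelAcyclic A n (univ : Set B) ∅ := by
  rcases isEmpty_or_nonempty B with hB | ⟨⟨b₀⟩⟩
  · rw [range_eq_empty, eq_empty_of_isEmpty (univ : Set B)]
    refine iff_of_true ?_ ?_ <;>
    exact fun _ _ _ => ⟨0, zero_mem _, mem_locVanishing.2 fun x hx => hx.elim⟩
  · have hp : IsRelMap (extend j id fun _ => b₀) (range j) ∅ univ ∅ := by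
      refine ⟨mapsTo_univ _ _, ?_, by simp⟩
      rintro _ ⟨⟨b, rfl⟩, -⟩
      exact continuousWithinAt_extend hj continuousAt_id
    have he : IsRelMap j univ ∅ (range j) ∅ :=
      ⟨fun b _ => mem_range_self b, fun b _ => hj.continuous.continuousWithinAt, by simp⟩
    refine ⟨fun h => h.of_isRelMap he hp isClosed_empty fun b _ => hj.injective.extend_apply _ _ _,
      fun h => h.of_isRelMap hp he isClosed_empty ?_⟩
    rintro _ ⟨⟨b, rfl⟩, -⟩
    rw [hj.injective.extend_apply, id]

lemma isRelMap_extend_onePoint [T2Space M] (hD : IsClosed D) (hj : IsEmbedding j)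
    (hjCD : range j = C \ D) :
    IsRelMap (extend j ((↑) : B → OnePoint B) fun _ => OnePoint.infty) C D univ
      {OnePoint.infty} := by
  refine ⟨mapsTo_univ _ _, fun x hx => ?_, ?_⟩
  · obtain ⟨b, rfl⟩ := hjCD ▸ hx
    have hrange : range j ∈ 𝓝[C] j b := by
      rw [hjCD]
      exact inter_mem_nhdsWithin C (hD.isOpen_compl.mem_nhds hx.2)
    exact (continuousWithinAt_extend hj
      OnePoint.continuous_coe.continuousAt).mono_of_mem_nhdsWithin hrange
  · rw [nhdsSetWithin_singleton, nhdsWithin_univ, Tendsto, OnePoint.le_nhds_infty]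
    refine fun s _ hs => mem_map.2 ?_
    have hDs : D ⊆ (j '' s)ᶜ := by
      rintro _ hx ⟨b, -, rfl⟩
      exact (hjCD.subset (mem_range_self b)).2 hx
    have hjs : IsClosed (j '' s) := (hs.image hj.continuous).isClosed
    filter_upwards [mem_inf_of_left (hjs.isOpen_compl.mem_nhdsSet.2 hDs)] with x hx
    by_cases hxj : x ∈ range j
    · obtain ⟨b, rfl⟩ := hxj
      rw [mem_preimage, hj.injective.extend_apply]
      exact .inl ⟨b, fun hb => hx (mem_image_of_mem j hb), rfl⟩
    · exact .inr (extend_apply' _ _ _ hxj)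

lemma isRelMap_elim_onePoint [T2Space M] (hC : IsCompact C) (hj : IsEmbedding j)
    (hjCD : range j = C \ D) {x₀ : M} (hx₀ : x₀ ∈ C ∩ D) :
    IsRelMap (fun o : OnePoint B => o.elim x₀ j) univ {OnePoint.infty} C D := by
  have hjC (b : B) : j b ∈ C \ D := hjCD ▸ mem_range_self b
  refine ⟨fun o _ => ?_, fun o ho => ?_, ?_⟩
  · induction o using OnePoint.rec with
    | infty => exact hx₀.1
    | coe b => exact (hjC b).1
  · induction o using OnePoint.rec with
    | infty => exact absurd rfl ho.2
    | coe b =>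
      exact ContinuousAt.continuousWithinAt (OnePoint.continuousAt_coe.2 hj.continuous.continuousAt)
  · rw [nhdsSetWithin_singleton, nhdsWithin_univ]
    have := hj.t2Space
    refine OnePoint.tendsto_nhds_infty'.2 ⟨?_, tendsto_inf.2 ⟨?_, ?_⟩⟩
    · exact (tendsto_pure_pure _ _).mono_right
        ((pure_le_nhdsWithin hx₀.1).trans (nhdsWithin_le_nhdsSetWithin hx₀.2))
    · rw [coclosedCompact_eq_cocompact]
      refine (hasBasis_nhdsSet D).tendsto_right_iff.2 fun W ⟨hW, hDW⟩ => mem_cocompact.2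
        ⟨j ⁻¹' (C \ W), ?_, fun b hb => by_contra fun h => hb ⟨(hjC b).1, h⟩⟩
      rw [hj.isInducing.isCompact_preimage_iff (hjCD ▸ sdiff_subset_sdiff_right hDW)]
      exact hC.diff hW
    · exact tendsto_principal.2 (Eventually.of_forall fun b => (hjC b).1)

lemma relAcyclic_iff_onePoint [T2Space M] (hC : IsCompact C) (hD : IsClosed D)
    (hCD : (C ∩ D).Nonempty) (hj : IsEmbedding j) (hjCD : range j = C \ D) :
    RelAcyclic A n C D ↔ RelAcyclic A n (univ : Set (OnePoint B)) {OnePoint.infty} := by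
  obtain ⟨x₀, hx₀⟩ := hCD
  have hp := isRelMap_extend_onePoint hD hj hjCD
  have he := isRelMap_elim_onePoint hC hj hjCD hx₀
  refine ⟨fun h => h.of_isRelMap he hp OnePoint.isClosed_infty ?_,
    fun h => h.of_isRelMap hp he hD (hjCD ▸ ?_)⟩
  · rintro o ⟨-, ho⟩
    obtain ⟨b, rfl⟩ := OnePoint.ne_infty_iff_exists.1 ho
    exact hj.injective.extend_apply _ _ _
  · rintro _ ⟨b, rfl⟩
    simp only [hj.injective.extend_apply, OnePoint.elim_some]

lemma relAcyclic_iff_subsingleton_Hc [T2Space M] (hC : IsCompact C) (hD : IsClosed D)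
    (hDC : D ⊆ C) (hj : IsEmbedding j) (hjCD : range j = C \ D) :
    RelAcyclic A n C D ↔ Subsingleton (Hc A (n + 1) B) := by
  by_cases hB : CompactSpace B
  · rw [Hc, if_pos hB, subsingleton_ASH_iff, ← relAcyclic_range_iff hj, hjCD,
      ← relAcyclic_union_iff_of_disjoint (hjCD ▸ isCompact_range hj.continuous).isClosed hD
        disjoint_sdiff_left, sdiff_union_of_subset hDC]
  · rw [Hc, if_neg hB, subsingleton_ASH_iff, ← relAcyclic_singleton_iff OnePoint.infty]
    refine relAcyclic_iff_onePoint hC hD (nonempty_iff_ne_empty.2 fun hCD => hB ?_) hj hjCD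
    rw [← sdiff_eq_left.2 (disjoint_iff_inter_eq_empty.2 hCD), ← hjCD, ← image_univ] at hC
    exact isCompact_univ_iff.1 (hj.isInducing.isCompact_iff.2 hC)

/-- The vanishing of the cohomology with compact supports, in degree `n`, of all locally compact
subspaces of `T`. -/
def HcVanishes (A : Type*) [AddCommGroup A] (n : ℕ) (T : Type*) [TopologicalSpace T] : Prop :=
  ∀ S : Set T, LocallyCompactSpace S → Subsingleton (Hc A n S)

lemma isLocallyClosed_of_locallyCompactSpace [T2Space T] (S : Set T) [LocallyCompactSpace S] :
    IsLocallyClosed S := by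
  refine ((isLocallyClosed_tfae S).out 0 3).2 fun x hx => ?_
  obtain ⟨K, hK, hxK⟩ := exists_compact_mem_nhds (⟨x, hx⟩ : S)
  obtain ⟨U, hU, hxU, hUK⟩ := mem_nhdsWithin.1 (mem_nhds_subtype_iff_nhdsWithin.1 hxK)
  have hKc : IsClosed ((↑) '' K : Set T) := (hK.image continuous_subtype_val).isClosed
  exact ⟨U, hxU, hU, hU.inter_closure.trans
    ((closure_minimal hUK hKc).trans (Subtype.coe_image_subset S K))⟩

lemma hcVanishes_of_relAcyclic [T2Space T] [CompactSpace T]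
    (h : ∀ C D : Set T, IsClosed C → IsClosed D → D ⊆ C → RelAcyclic A n C D) :
    HcVanishes A (n + 1) T := fun S _ => by
  have hD : IsClosed (closure S \ S) :=
    isOpen_compl_iff.1 (isLocallyClosed_of_locallyCompactSpace S).isOpen_coborder
  have hS : range ((↑) : S → T) = closure S \ (closure S \ S) := by
    rw [Subtype.range_coe, sdiff_sdiff_cancel_left subset_closure]
  exact (relAcyclic_iff_subsingleton_Hc isClosed_closure.isCompact hD sdiff_subset
    IsEmbedding.subtypeVal hS).1 (h _ _ isClosed_closure hD sdiff_subset)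

lemma HcVanishes.relAcyclic [T2Space M] (hT : HcVanishes A (n + 1) T) {S : Set T} {j : S → M}
    (hC : IsCompact C) (hD : IsClosed D) (hDC : D ⊆ C) (hj : IsEmbedding j)
    (hjCD : range j = C \ D) : RelAcyclic A n C D := by
  have := isCompact_iff_compactSpace.1 hC
  have hjC (b : S) : j b ∈ C := (hjCD.subset (mem_range_self b)).1
  have hrange : range (codRestrict j C hjC) = (↑) ⁻¹' Dᶜ := by
    ext ⟨x, hx⟩
    have hxj : x ∈ range j ↔ x ∉ D := by rw [hjCD, Set.mem_sdiff, and_iff_right hx]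
    exact (exists_congr fun b => Subtype.ext_iff).trans hxj
  have hopen : IsOpenEmbedding (codRestrict j C hjC) :=
    ⟨hj.codRestrict C hjC, hrange ▸ hD.isOpen_compl.preimage continuous_subtype_val⟩
  exact (relAcyclic_iff_subsingleton_Hc hC hD hDC hj hjCD).2 (hT S hopen.locallyCompactSpace)

end Comparison

end AS

/-! ### Zero-dimensional fibres -/

section ZeroDimensional

open Filter Topology

lemma covDim_eq_zero_iff {T : Type*} [TopologicalSpace T] : covDim T = 0 ↔ CovDimLE T 0 := by
  refine ⟨fun h => ?_, fun h => le_antisymm (sInf_le ⟨0, rfl, h⟩) zero_le⟩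
  have hne : {e : ℕ∞ | ∃ n : ℕ, e = n ∧ CovDimLE T n}.Nonempty := by
    rw [nonempty_iff_ne_empty]
    intro hempty
    rw [covDim, hempty, sInf_empty] at h
    exact ENat.top_ne_zero h
  obtain ⟨n, hn, hT⟩ := csInf_mem hne
  rw [← covDim, h] at hn
  rwa [← Nat.cast_eq_zero.1 hn.symm]

lemma CovDimLE.exists_isClopen {T : Type*} [TopologicalSpace T] [T1Space T]
    (h : CovDimLE T 0) {U : Set T} (hU : IsOpen U) {x : T} (hx : x ∈ U) :
    ∃ v : Set T, IsClopen v ∧ x ∈ v ∧ v ⊆ U := by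
  classical
  obtain ⟨V, hVo, hV, hVU, hcard⟩ := h {U, {x}ᶜ} (by simp [hU]) <| by
    rw [sUnion_pair, ← compl_subset_iff_union, compl_subset_compl, singleton_subset_iff]
    exact hx
  obtain ⟨v, hv, hxv⟩ := mem_sUnion.1 (hV ▸ mem_univ x)
  refine ⟨v, ⟨isOpen_compl_iff.1 (isOpen_iff_mem_nhds.2 fun y hy => ?_), hVo v hv⟩, hxv, ?_⟩
  · obtain ⟨w, hw, hyw⟩ := mem_sUnion.1 (hV ▸ mem_univ y)
    filter_upwards [(hVo w hw).mem_nhds hyw] with z hzw hzv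
    have hvw : v ≠ w := fun hvw => hy (hvw ▸ hyw)
    have := hcard {v, w} (by simp [insert_subset_iff, hv, hw]) ⟨z, by simp [hzv, hzw]⟩
    rw [Finset.card_pair hvw] at this
    omega
  · obtain ⟨u, rfl | rfl, hvu⟩ := hVU v hv
    · exact hvu
    · exact absurd rfl (hvu hxv)

lemma CovDimLE.exists_disjoint_isOpen {T : Type*} [TopologicalSpace T] [T2Space T] {F U : Set T}
    (h : CovDimLE F 0) (hF : IsCompact F) {x : T} (hxF : x ∈ F) (hU : IsOpen U) (hxU : x ∈ U) :
    ∃ G G' : Set T, IsOpen G ∧ IsOpen G' ∧ Disjoint G G' ∧ x ∈ G ∧ G ⊆ U ∧ F ⊆ G ∪ G' := by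
  have := isCompact_iff_compactSpace.1 hF
  obtain ⟨v, hv, hxv, hvU⟩ :=
    h.exists_isClopen (hU.preimage continuous_subtype_val) (x := ⟨x, hxF⟩) hxU
  obtain ⟨G, G', hG, hG', hvG, hvG', hdisj⟩ := SeparatedNhds.of_isCompact_isCompact
    (hv.isClosed.isCompact.image continuous_subtype_val)
    (hv.compl.isClosed.isCompact.image continuous_subtype_val)
    (disjoint_image_of_injective Subtype.val_injective disjoint_compl_right)
  refine ⟨G ∩ U, G', hG.inter hU, hG', hdisj.mono_left inter_subset_left,
    ⟨hvG ⟨_, hxv, rfl⟩, hxU⟩, inter_subset_right, fun y hy => ?_⟩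
  by_cases hyv : (⟨y, hy⟩ : F) ∈ v
  · exact .inl ⟨hvG ⟨_, hyv, rfl⟩, hvU hyv⟩
  · exact .inr (hvG' ⟨_, hyv, rfl⟩)

lemma exists_bump_of_covDimLE_zero {X Y : Type*} [TopologicalSpace X] [CompactSpace X] [T2Space X]
    [TopologicalSpace Y] [T35Space Y] {f : X → Y} (hf : Continuous f) {x : X}
    (h : CovDimLE (f ⁻¹' {f x} : Set X) 0) {U : Set X} (hU : U ∈ 𝓝 x) :
    ∃ (ρ : Y → ℝ) (u : X → ℝ), Continuous ρ ∧ Continuous u ∧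
      (∀ z, u z = 0 ∨ u z = ρ (f z)) ∧ u x ≠ 0 ∧ support u ⊆ U := by
  obtain ⟨G, G', hG, hG', hdisj, hxG, hGU, hfG⟩ := h.exists_disjoint_isOpen
    (isClosed_singleton.preimage hf).isCompact rfl isOpen_interior (mem_interior_iff_mem_nhds.2 hU)
  have hK : IsClosed (f '' (G ∪ G')ᶜ) := hf.isClosedMap _ (hG.union hG').isClosed_compl
  have hfx : f x ∉ f '' (G ∪ G')ᶜ := fun ⟨z, hz, hzx⟩ => hz (hfG hzx)
  obtain ⟨ρ, hρ, hρx, hρK⟩ := CompletelyRegularSpace.completely_regular _ _ hK hfx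
  have hρ' : Continuous fun y => 1 - (ρ y : ℝ) := by fun_prop
  refine ⟨fun y => 1 - (ρ y : ℝ), G.indicator fun z => 1 - (ρ (f z) : ℝ), hρ',
    (hρ'.comp hf).indicator fun z hz => ?_, fun z => indicator_eq_zero_or_self G _ z, ?_,
    support_indicator_subset.trans (hGU.trans interior_subset)⟩
  · rw [hG.frontier_eq] at hz
    have hzG' : z ∉ G' := fun hzG' => disjoint_left.1 (hdisj.closure_left hG') hz.1 hzG'
    have hzK : ρ (f z) = 1 := hρK ⟨z, fun h => h.elim hz.2 hzG', rfl⟩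
    simp [hzK]
  · simp [indicator_of_mem hxG, hρx]

end ZeroDimensional

namespace AS

open Filter Topology

variable {A : Type*} [AddCommGroup A] {n : ℕ}

/-! ### Light maps -/

lemma HcVanishes.relAcyclic_of_graph {Y Z : Type*} [TopologicalSpace Y] [TopologicalSpace Z]
    [T2Space (Y × Z)] (hY : HcVanishes A (n + 1) Y) {C D : Set (Y × Z)} (hC : IsCompact C)
    (hD : IsClosed D) (hDC : D ⊆ C) {g : Y → Z} (hg : Continuous g)
    (hgCD : ∀ m ∈ C \ D, m.2 = g m.1) : RelAcyclic A n C D := by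
  have hj : IsEmbedding fun y : Prod.fst '' (C \ D) => ((y : Y), g y) :=
    IsEmbedding.of_comp (by fun_prop) continuous_fst IsEmbedding.subtypeVal
  refine hY.relAcyclic hC hD hDC hj (subset_antisymm ?_ fun m hm => ?_)
  · rintro _ ⟨⟨_, m, hm, rfl⟩, rfl⟩
    change (m.1, g m.1) ∈ C \ D
    rwa [← hgCD m hm]
  · exact ⟨⟨m.1, mem_image_of_mem _ hm⟩, Prod.ext rfl (hgCD m hm).symm⟩

-- The part of `C` on which a two-valued coordinate vanishes is split off, so that the coordinate
-- becomes a function of the point of `Y` on both pieces.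
lemma HcVanishes.relAcyclic_of_two_valued {Y ι : Type*} [TopologicalSpace Y] [T35Space Y]
    (hY : HcVanishes A (n + 1) Y) (S : Finset ι) {C D : Set (Y × (ι → ℝ))} (hC : IsCompact C)
    (hD : IsClosed D) (hDC : D ⊆ C)
    (hS : ∀ c ∈ S, ∃ ρ : Y → ℝ, Continuous ρ ∧ ∀ m ∈ C \ D, m.2 c = 0 ∨ m.2 c = ρ m.1)
    (hSc : ∀ c ∉ S, ∃ g : Y → ℝ, Continuous g ∧ ∀ m ∈ C \ D, m.2 c = g m.1) :
    RelAcyclic A n C D := by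
  classical
  induction S using Finset.induction_on generalizing C D with
  | empty =>
    choose g hg hgCD using fun c => hSc c (Finset.notMem_empty c)
    exact hY.relAcyclic_of_graph hC hD hDC (continuous_pi hg) fun m hm =>
      funext fun c => hgCD c m hm
  | insert c S hc ih =>
    set E : Set (Y × (ι → ℝ)) := D ∪ C ∩ {m | m.2 c = 0}
    have hEC : E ⊆ C := union_subset hDC inter_subset_left
    have hEcl : IsClosed E :=
      hD.union (hC.isClosed.inter (isClosed_eq (by fun_prop) continuous_const))
    have hEcpt : IsCompact E := hC.of_isClosed_subset hEcl hEC
    have hCE : C \ E ⊆ C \ D := sdiff_subset_sdiff_right subset_union_left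
    have hED : E \ D ⊆ C \ D := sdiff_subset_sdiff_left hEC
    obtain ⟨ρ, hρ, hρCD⟩ := hS c (Finset.mem_insert_self c S)
    refine RelAcyclic.trans hEcpt hD subset_union_left hEC
      (ih hC hEcl hEC (fun b hb => ?_) fun b hb => ?_)
      (ih hEcpt hD subset_union_left (fun b hb => ?_) fun b hb => ?_)
    · obtain ⟨ρ, hρ, hρCD⟩ := hS b (Finset.mem_insert_of_mem hb)
      exact ⟨ρ, hρ, fun m hm => hρCD m (hCE hm)⟩
    · rcases eq_or_ne b c with rfl | hbc
      · exact ⟨ρ, hρ, fun m hm => (hρCD m (hCE hm)).resolve_left fun h => hm.2 (.inr ⟨hm.1, h⟩)⟩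
      · obtain ⟨g, hg, hgCD⟩ := hSc b (by simp [hbc, hb])
        exact ⟨g, hg, fun m hm => hgCD m (hCE hm)⟩
    · obtain ⟨ρ, hρ, hρCD⟩ := hS b (Finset.mem_insert_of_mem hb)
      exact ⟨ρ, hρ, fun m hm => hρCD m (hED hm)⟩
    · rcases eq_or_ne b c with rfl | hbc
      · exact ⟨fun _ => 0, continuous_const, fun m hm => (hm.1.resolve_left hm.2).2⟩
      · obtain ⟨g, hg, hgCD⟩ := hSc b (by simp [hbc, hb])
        exact ⟨g, hg, fun m hm => hgCD m (hED hm)⟩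

lemma exists_cobounding_of_small_fibres {X M : Type*} [TopologicalSpace X] [TopologicalSpace M]
    {C D : Set X} {q : X → M} (hq : Continuous q) {φ : Cochain A X (n + 1)}
    (hφ : φ ∈ vanishing A (comap q (𝓝ˢ (q '' D)) ⊓ 𝓟 C) (n + 1))
    (hdφ : ∀ x ∈ C, d A X (n + 1) φ ∈ vanishing A (comap q (𝓝 (q x)) ⊓ 𝓟 C) (n + 2))
    (h : RelAcyclic A n (q '' C) (q '' D)) :
    ∃ ψ ∈ vanishing A (𝓝ˢ[C] D) n, φ - d A X n ψ ∈ locVanishing A C (n + 1) := by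
  rcases C.eq_empty_or_nonempty with rfl | ⟨x₀, -⟩
  · exact ⟨0, zero_mem _, mem_locVanishing.2 fun x hx => hx.elim⟩
  have : Nonempty X := ⟨x₀⟩
  set σ : M → X := invFunOn q C
  have hσC : MapsTo σ (q '' C) C := fun m hm => invFunOn_mem hm
  have hqσ : EqOn (q ∘ σ) id (q '' C) := fun m hm => invFunOn_eq hm
  have hσ (k : Filter M) : Tendsto σ (k ⊓ 𝓟 (q '' C)) (comap q k ⊓ 𝓟 C) := by
    refine tendsto_inf.2 ⟨tendsto_comap_iff.2 ?_,
      tendsto_inf_right (tendsto_principal_principal.2 hσC)⟩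
    exact (tendsto_congr' (mem_inf_of_right hqσ)).2 (tendsto_inf_left tendsto_id)
  have hqC (k : Filter M) : Tendsto q (comap q k ⊓ 𝓟 C) (k ⊓ 𝓟 (q '' C)) :=
    tendsto_comap.inf (tendsto_principal_principal.2 (mapsTo_image q C))
  obtain ⟨ψ, hψD, hψ⟩ := h (pull A σ (n + 1) φ) (pull_mem_vanishing (hσ _) hφ)
    (mem_locVanishing.2 (forall_mem_image.2 fun x hx => pull_mem_vanishing (hσ _) (hdφ x hx)))
  refine ⟨pull A q n ψ - prism (σ ∘ q) n φ, vanishing_mono ?_ (pull_sub_prism_mem_vanishing le_rfl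
    ((hσ _).comp (hqC _)) (hqC _) hφ hψD), mem_locVanishing.2 fun x hx => vanishing_mono ?_
    (sub_d_pull_sub_prism_mem_vanishing le_rfl ((hσ _).comp (hqC _)) (hqC _) (hdφ x hx)
      (mem_locVanishing.1 hψ _ (mem_image_of_mem q hx)))⟩
  · exact inf_le_inf_right _ (hq.tendsto_nhdsSet (mapsTo_image q D)).le_comap
  · exact inf_le_inf_right _ (hq.tendsto x).le_comap

section

variable {X Y : Type*} [TopologicalSpace X] [CompactSpace X] [T2Space X] [TopologicalSpace Y]
  [T35Space Y] {f : X → Y}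

lemma exists_bump_mem_vanishing (hf : Continuous f) {x : X}
    (hx : CovDimLE (f ⁻¹' {f x} : Set X) 0) {C D V : Set X} (hD : IsClosed D) (hV : V ∈ 𝓝ˢ D)
    {φ : Cochain A X n} (hφ : φ ∈ vanishing A (𝓝[C] x) n) :
    ∃ (ρ : Y → ℝ) (u : X → ℝ), Continuous ρ ∧ Continuous u ∧
      (∀ z, u z = 0 ∨ u z = ρ (f z)) ∧ u x ≠ 0 ∧
      φ ∈ vanishing A (𝓟 (support u ∩ C)) n ∧ ((support u ∩ D).Nonempty → support u ⊆ V) := by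
  obtain ⟨W₁, hW₁, hφ⟩ := mem_vanishing_inf_principal_iff.1 hφ
  obtain ⟨W₂, hW₂, hWV⟩ := exists_mem_nhds_subset_of_inter_nonempty hD hV x
  obtain ⟨ρ, u, hρ, hu, huρ, hux, huW⟩ := exists_bump_of_covDimLE_zero hf hx (inter_mem hW₁ hW₂)
  obtain ⟨huW₁, huW₂⟩ := subset_inter_iff.1 huW
  exact ⟨ρ, u, hρ, hu, huρ, hux,
    vanishing_mono (principal_mono.2 (inter_subset_inter_left C huW₁)) hφ,
    fun hne => huW₂.trans (hWV (hne.mono (inter_subset_inter_left D huW₂)))⟩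

lemma HcVanishes.relAcyclic_of_light (hY : HcVanishes A (n + 1) Y) (hf : Continuous f)
    (hlight : ∀ y, CovDimLE (f ⁻¹' {y} : Set X) 0) {C D : Set X} (hC : IsClosed C)
    (hD : IsClosed D) (hDC : D ⊆ C) : RelAcyclic A n C D := by
  intro φ hφ hdφ
  obtain ⟨V, hV, hφV⟩ := mem_vanishing_inf_principal_iff.1 hφ
  choose! ρ u hρ hu huρ hux hudφ huV using fun x (hx : x ∈ C) =>
    exists_bump_mem_vanishing hf (hlight (f x)) hD hV (mem_locVanishing.1 hdφ x hx)
  obtain ⟨J, hJC, hJ⟩ := hC.isCompact.elim_nhds_subcover (fun x => support (u x))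
    fun x hx => (hu x hx).isOpen_support.mem_nhds (hux x hx)
  have hJ (x : X) (hx : x ∈ C) : ∃ c : J, u c x ≠ 0 := by
    obtain ⟨c, hc, hcx⟩ := mem_iUnion₂.1 (hJ hx)
    exact ⟨⟨c, hc⟩, hcx⟩
  set q : X → Y × (J → ℝ) := fun x => (f x, fun c => u c x)
  have hq : Continuous q := hf.prodMk (continuous_pi fun c => hu c (hJC c c.2))
  have hopen (c : J) : IsOpen {m : Y × (J → ℝ) | m.2 c ≠ 0} :=
    isOpen_ne_fun (by fun_prop) continuous_const
  refine exists_cobounding_of_small_fibres hq (mem_vanishing_inf_principal_iff.2 ⟨V, ?_, hφV⟩)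
    (fun x hx => ?_) ?_
  · refine mem_comap.2 ⟨⋃ c ∈ {c : J | (support (u c) ∩ D).Nonempty}, {m | m.2 c ≠ 0},
      (isOpen_biUnion fun c _ => hopen c).mem_nhdsSet.2 (image_subset_iff.2 fun x hx => ?_), ?_⟩
    · obtain ⟨c, hcx⟩ := hJ x (hDC hx)
      exact mem_biUnion (x := c) ⟨x, hcx, hx⟩ hcx
    · intro x hx
      obtain ⟨c, hc, hcx⟩ := mem_iUnion₂.1 hx
      exact huV c (hJC c c.2) hc hcx
  · obtain ⟨c, hcx⟩ := hJ x hx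
    exact mem_vanishing_inf_principal_iff.2
      ⟨support (u c), preimage_mem_comap ((hopen c).mem_nhds hcx), hudφ c (hJC c c.2)⟩
  · refine hY.relAcyclic_of_two_valued Finset.univ (hC.isCompact.image hq)
      (hD.isCompact.image hq).isClosed (image_mono hDC) (fun c _ => ⟨ρ c, hρ c (hJC c c.2), ?_⟩)
      fun c hc => absurd (Finset.mem_univ c) hc
    rintro _ ⟨⟨x, -, rfl⟩, -⟩
    exact huρ c (hJC c c.2) x

lemma HcVanishes.of_light (hY : HcVanishes A (n + 1) Y) (hf : Continuous f)
    (hlight : ∀ y, CovDimLE (f ⁻¹' {y} : Set X) 0) : HcVanishes A (n + 1) X :=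
  hcVanishes_of_relAcyclic fun _ _ => hY.relAcyclic_of_light hf hlight

end

end AS

theorem cohDim_le_of_light_map_general {X Y : Type*} [TopologicalSpace X] [CompactSpace X]
    [T2Space X] [TopologicalSpace Y] [T35Space Y] {f : X → Y} (hf : Continuous f)
    (hlight : ∀ y, covDim (f ⁻¹' {y} : Set X) = 0) (A : Type*) [AddCommGroup A] :
    cohDim A X ≤ cohDim A Y := by
  refine sSup_le ?_
  rintro _ ⟨_ | n, rfl, B, hB, hBn⟩
  · exact zero_le
  · by_contra hlt
    have hY : AS.HcVanishes A (n + 1) Y := fun S hS =>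
      not_nontrivial_iff_subsingleton.1 fun hSn => hlt (le_sSup ⟨n + 1, rfl, S, hS, hSn⟩)
    exact not_nontrivial_iff_subsingleton.2
      (hY.of_light hf (fun y => covDim_eq_zero_iff.1 (hlight y)) B hB) hBn


/-- **Lemma 12** (Dranishnikov–West).  If `f : X → Y` is a light (all point inverses
zero-dimensional) continuous map of a compact metric space `X` onto a compact metric space
`Y` of finite covering dimension, then `dim_A X ≤ dim_A Y` for every abelian group `A`. -/
theorem cohDim_le_of_light_map (X : Type) [MetricSpace X] [CompactSpace X]
    (Y : Type) [MetricSpace Y] [CompactSpace Y]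
    (f : X → Y) (hf : Continuous f) (hsurj : Function.Surjective f)
    (hlight : ∀ y : Y, covDim (f ⁻¹' {y} : Set X) = 0)
    (hfin : covDim Y < ⊤)
    (A : Type*) [AddCommGroup A] :
    cohDim A X ≤ cohDim A Y :=
  cohDim_le_of_light_map_general hf hlight A
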